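/- arXiv:2302.05365 — 2 statements merged into one kernel-verified Lean document; each statement's English description precedes it below -/
import Mathlib

section
/- Let n ≥ 1 and k ≥ 1 be integers with gcd(k, n+1) = 1. Then for every integer d with 0 ≤ d ≤ nk+1, one has (N_{d,k} − N_{d−1,k}) − (N_{nk+1−d,k} − N_{nk−d,k}) = q_d, where q_d is the coefficient of t^d in Q_{n,k} (an equality of rational numbers after casting the integer left-hand side to ℚ). -/
/-!
Let `G` be the Gaussian binomial coefficient `[n + k choose k]`, the generating polynomial of the
tuples `I` of sum `k` by weight `∑ i * I i`. Then `∑_d N_{d,k} t^d = G / (1 - t^(n+1))` and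
`Q = (1 - t) G`. Coprimality of `k` and `n + 1` makes `1 - t^(n+1)` divide `Q`
(`dvd_one_sub_mul_gaussGen`), so the differences `N_{d,k} - N_{d-1,k}` are the coefficients `r_d`
of the polynomial `R = Q / (1 - t^(n+1))` (`kloostermanN_diff`). As
`R = ∏_{i=2}^k (1 - t^(n+i)) / ∏_{i=2}^k (1 - t^i)` is palindromic of degree `n (k - 1)`
(`quotient_palindromic`), `r_{nk+1-d} = r_{d-n-1}`, and the left-hand side of the claim is
`r_d - r_{d-n-1} = q_d`.
-/

/-- `N_{d,k}`: the number of tuples `(a, I₀, …, I_n) ∈ ℕ^{n+2}` with `I₀ + ⋯ + I_n = k` and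
`(n+1)·a + I₁ + 2I₂ + ⋯ + n·I_n = d`.  The index `d` ranges over `ℤ`, so that `N_{d,k} = 0`
for `d < 0`. -/
noncomputable def kloostermanN (n k : ℕ) (d : ℤ) : ℕ :=
  Nat.card {p : ℕ × (Fin (n + 1) → ℕ) //
    (∑ i, p.2 i) = k ∧
    (((n + 1) * p.1 + ∑ i : Fin (n + 1), (i : ℕ) * p.2 i : ℕ) : ℤ) = d}

open Polynomial

/-- The generating polynomial `∑_I X ^ (I₁ + 2 I₂ + ⋯)` over the tuples `I = (I₀, …, I_{m-1})` of
natural numbers with sum `k`, i.e. the Gaussian binomial coefficient `[m + k - 1 choose k]`. -/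
noncomputable def gaussGen (m k : ℕ) : ℚ[X] :=
  ∑ I ∈ Finset.Nat.antidiagonalTuple m k, X ^ (∑ i : Fin m, (i : ℕ) * I i)

/-- Splitting off the entry `I₀ = p.1`, which has weight zero, lowers every other index by one. -/
lemma gaussGen_succ_left (m k : ℕ) :
    gaussGen (m + 1) k = ∑ p ∈ Finset.HasAntidiagonal.antidiagonal k, X ^ p.2 * gaussGen m p.2 := by
  simp only [gaussGen, Finset.mul_sum]
  rw [Finset.sum_sigma']
  refine Finset.sum_bij' (fun I _ => ⟨(I 0, ∑ i, Fin.tail I i), Fin.tail I⟩)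
    (fun s _ => Fin.cons s.1.1 s.2) ?_ ?_ ?_ ?_ ?_
  · intro I hI
    simp only [Finset.Nat.mem_antidiagonalTuple, Fin.sum_univ_succ] at hI
    simp [Finset.Nat.mem_antidiagonalTuple, Fin.tail, hI]
  · rintro ⟨⟨a, b⟩, J⟩ h
    simp only [Finset.mem_sigma, Finset.HasAntidiagonal.mem_antidiagonal,
      Finset.Nat.mem_antidiagonalTuple] at h
    simp [Finset.Nat.mem_antidiagonalTuple, Fin.sum_univ_succ, h]
  · intro I _
    simp
  · rintro ⟨⟨a, b⟩, J⟩ h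
    simp only [Finset.mem_sigma, Finset.HasAntidiagonal.mem_antidiagonal,
      Finset.Nat.mem_antidiagonalTuple] at h
    obtain ⟨-, rfl⟩ := h
    simp
  · intro I _
    rw [← pow_add]
    congr 1
    simp [Fin.sum_univ_succ, Fin.tail, add_mul, Finset.sum_add_distrib, add_comm]

/-- Pascal's rule for Gaussian binomial coefficients. -/
lemma gaussGen_succ_succ (m k : ℕ) :
    gaussGen (m + 1) (k + 1) = gaussGen (m + 1) k + X ^ (k + 1) * gaussGen m (k + 1) := by
  rw [gaussGen_succ_left, gaussGen_succ_left, Finset.Nat.antidiagonal_succ, Finset.sum_cons,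
    Finset.sum_map, add_comm]
  rfl

lemma gaussGen_zero_right (m : ℕ) : gaussGen m 0 = 1 := by
  simp [gaussGen, Finset.Nat.antidiagonalTuple_zero_right]

lemma gaussGen_mul_prod (m k : ℕ) :
    gaussGen m k * ∏ i ∈ Finset.range k, (1 - (X : ℚ[X]) ^ (i + 1)) =
      ∏ i ∈ Finset.range k, (1 - (X : ℚ[X]) ^ (m + i)) := by
  induction m generalizing k with
  | zero =>
    cases k with
    | zero => simp [gaussGen_zero_right]
    | succ k => simp [gaussGen, Finset.prod_range_succ']
  | succ m ihm =>
    induction k with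
    | zero => simp [gaussGen_zero_right]
    | succ k ihk =>
      have h := ihm (k + 1)
      have e : ∏ i ∈ Finset.range k, (1 - (X : ℚ[X]) ^ (m + (i + 1))) =
          ∏ i ∈ Finset.range k, (1 - (X : ℚ[X]) ^ (m + 1 + i)) :=
        Finset.prod_congr rfl fun i _ => by rw [add_assoc, add_comm 1 i]
      rw [Finset.prod_range_succ' (fun i => 1 - (X : ℚ[X]) ^ (m + i)), e] at h
      rw [gaussGen_succ_succ, add_mul, mul_assoc, h,
        Finset.prod_range_succ (fun i => 1 - (X : ℚ[X]) ^ (i + 1)), ← mul_assoc, ihk,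
        Finset.prod_range_succ]
      ring

lemma one_sub_X_pow_ne_zero {j : ℕ} (hj : 0 < j) : (1 - (X : ℚ[X]) ^ j) ≠ 0 := by
  intro h
  have := congrArg (fun p => coeff p 0) h
  simp [coeff_X_pow, hj.ne] at this

lemma natDegree_one_sub_X_pow (j : ℕ) : (1 - (X : ℚ[X]) ^ j).natDegree = j := by
  rw [← natDegree_neg, neg_sub]
  exact natDegree_X_pow_sub_C (n := j) (r := (1 : ℚ))

lemma reverse_one_sub_X_pow (j : ℕ) :
    (1 - (X : ℚ[X]) ^ j).reverse = -(1 - (X : ℚ[X]) ^ j) := by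
  rw [reverse, natDegree_one_sub_X_pow, reflect_sub, reflect_one, reflect_monomial,
    revAt_le le_rfl]
  simp

lemma prod_ne_zero (f : ℕ → ℕ) (hf : ∀ i, 0 < f i) (K : ℕ) :
    ∏ i ∈ Finset.range K, (1 - (X : ℚ[X]) ^ f i) ≠ 0 :=
  Finset.prod_ne_zero_iff.mpr fun i _ => one_sub_X_pow_ne_zero (hf i)

lemma natDegree_prod_one_sub (f : ℕ → ℕ) (hf : ∀ i, 0 < f i) (K : ℕ) :
    (∏ i ∈ Finset.range K, (1 - (X : ℚ[X]) ^ f i)).natDegree = ∑ i ∈ Finset.range K, f i := by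
  rw [natDegree_prod _ _ fun i _ => one_sub_X_pow_ne_zero (hf i)]
  simp only [natDegree_one_sub_X_pow]

lemma reverse_prod_one_sub (f : ℕ → ℕ) (K : ℕ) :
    (∏ i ∈ Finset.range K, (1 - (X : ℚ[X]) ^ f i)).reverse =
      (-1) ^ K * ∏ i ∈ Finset.range K, (1 - (X : ℚ[X]) ^ f i) := by
  induction K with
  | zero => simpa using reverse_C (1 : ℚ)
  | succ K ih =>
    rw [Finset.prod_range_succ, reverse_mul_of_domain, ih, reverse_one_sub_X_pow]
    ring

/-- Two products of `K` factors `1 - X ^ j` are both palindromic up to the sign `(-1) ^ K`, so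
their quotient is palindromic. -/
lemma quotient_palindromic (n K : ℕ) (R : ℚ[X])
    (hR : R * ∏ i ∈ Finset.range K, (1 - (X : ℚ[X]) ^ (i + 2)) =
      ∏ i ∈ Finset.range K, (1 - (X : ℚ[X]) ^ (n + i + 2))) :
    R.natDegree = n * K ∧ R.reverse = R := by
  have hA := prod_ne_zero (fun i => i + 2) (fun i => by omega) K
  have hB := prod_ne_zero (fun i => n + i + 2) (fun i => by omega) K
  have hR0 : R ≠ 0 := by
    rintro rfl
    exact hB (by rw [← hR, zero_mul])
  constructor
  · have h := congrArg natDegree hR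
    rw [natDegree_mul hR0 hA, natDegree_prod_one_sub (fun i => i + 2) (fun i => by omega),
      natDegree_prod_one_sub (fun i => n + i + 2) (fun i => by omega)] at h
    simp only [Finset.sum_add_distrib, Finset.sum_const, Finset.card_range, smul_eq_mul,
      add_assoc] at h
    linarith
  · have h := congrArg reverse hR
    rw [reverse_mul_of_domain, reverse_prod_one_sub (fun i => i + 2),
      reverse_prod_one_sub (fun i => n + i + 2), ← hR] at h
    refine mul_right_cancel₀ (mul_ne_zero (pow_ne_zero K (neg_ne_zero.mpr one_ne_zero)) hA)
      (h.trans ?_)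
    ring

/-- If `gcd(K + 1, n + 1) = 1` then `1 - X ^ (n + 1)` divides `(1 - X) [n + K + 1 choose K + 1]`:
it divides `(1 - X ^ (K + 1)) [n + K + 1 choose K + 1] = (1 - X ^ (n + 1)) [n + K + 1 choose K]`,
and `1 - X` is a combination of `1 - X ^ (K + 1)` and `1 - X ^ (n + 1)`. -/
lemma dvd_one_sub_mul_gaussGen (n K : ℕ) (hn : 1 ≤ n) (hgcd : Nat.gcd (K + 1) (n + 1) = 1) :
    (1 - (X : ℚ[X]) ^ (n + 1)) ∣ (1 - X) * gaussGen (n + 1) (K + 1) := by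
  have h1 : (1 - (X : ℚ[X]) ^ (K + 1)) * gaussGen (n + 1) (K + 1) =
      (1 - X ^ (n + 1)) * gaussGen (n + 2) K := by
    refine mul_right_cancel₀ (prod_ne_zero (fun i => i + 1) (fun i => by omega) K) ?_
    have e : ∏ i ∈ Finset.range K, (1 - (X : ℚ[X]) ^ (n + 1 + (i + 1))) =
        ∏ i ∈ Finset.range K, (1 - (X : ℚ[X]) ^ (n + 2 + i)) :=
      Finset.prod_congr rfl fun i _ => by congr 2; omega
    have ha := gaussGen_mul_prod (n + 1) (K + 1)
    rw [Finset.prod_range_succ, Finset.prod_range_succ', e, ← gaussGen_mul_prod] at ha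
    simp only [add_zero] at ha
    linear_combination ha
  obtain ⟨u, -, hu⟩ := Nat.exists_mul_mod_eq_one_of_coprime (n := K + 1) hgcd
    (show 1 < n + 1 by omega)
  have huv : (K + 1) * u = (n + 1) * ((K + 1) * u / (n + 1)) + 1 := by
    have := Nat.div_add_mod ((K + 1) * u) (n + 1)
    omega
  generalize (K + 1) * u / (n + 1) = v at huv
  obtain ⟨a, ha⟩ := one_sub_dvd_one_sub_pow ((X : ℚ[X]) ^ (K + 1)) u
  obtain ⟨b, hb⟩ := one_sub_dvd_one_sub_pow ((X : ℚ[X]) ^ (n + 1)) v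
  rw [← pow_mul] at ha hb
  rw [huv, pow_succ] at ha
  refine ⟨a * gaussGen (n + 2) K - X * b * gaussGen (n + 1) (K + 1), ?_⟩
  linear_combination (gaussGen (n + 1) (K + 1)) * ha + a * h1 -
    X * gaussGen (n + 1) (K + 1) * hb

open scoped Classical in
/-- The tuple `I` determines `a`, so `N_{d,k}` counts the `I` for which a suitable `a` exists. -/
lemma kloostermanN_eq_sum (n k : ℕ) (d : ℤ) :
    (kloostermanN n k d : ℚ) = ∑ I ∈ Finset.Nat.antidiagonalTuple (n + 1) k,
      if ∃ a : ℕ, (((n + 1) * a + ∑ i : Fin (n + 1), (i : ℕ) * I i : ℕ) : ℤ) = d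
        then 1 else 0 := by
  rw [Finset.sum_boole, Nat.cast_inj, kloostermanN, ← Nat.subtype_card _ (fun x => Iff.rfl)]
  refine Nat.card_congr (Equiv.ofBijective
    (fun p => ⟨p.1.2, Finset.mem_filter.mpr
      ⟨Finset.Nat.mem_antidiagonalTuple.mpr p.2.1, p.1.1, p.2.2⟩⟩) ⟨?_, ?_⟩)
  · rintro ⟨⟨a, I⟩, h1, h2⟩ ⟨⟨b, J⟩, h3, h4⟩ h
    simp only [Subtype.mk.injEq] at h
    subst h
    have h5 : (n + 1) * a = (n + 1) * b := by
      simp only at h2 h4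
      omega
    simp [Nat.eq_of_mul_eq_mul_left (Nat.succ_pos n) h5]
  · rintro ⟨I, hI⟩
    obtain ⟨h1, a, h2⟩ := Finset.mem_filter.mp hI
    exact ⟨⟨(a, I), Finset.Nat.mem_antidiagonalTuple.mp h1, h2⟩, rfl⟩

lemma kloostermanN_neg (n k : ℕ) (d : ℤ) (hd : d < 0) : kloostermanN n k d = 0 := by
  have h := kloostermanN_eq_sum n k d
  rw [Finset.sum_eq_zero] at h
  · exact_mod_cast h
  · intro I _
    rw [if_neg]
    rintro ⟨a, ha⟩
    omega

open scoped Classical in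
/-- Separating the solutions with `a = 0` from those with `a ≥ 1`. -/
lemma kloostermanN_sub (n k d : ℕ) :
    (kloostermanN n k d : ℚ) - kloostermanN n k ((d : ℤ) - (n + 1 : ℕ)) =
      (gaussGen (n + 1) k).coeff d := by
  rw [kloostermanN_eq_sum, kloostermanN_eq_sum, ← Finset.sum_sub_distrib, gaussGen,
    finsetSum_coeff]
  refine Finset.sum_congr rfl fun I _ => ?_
  rw [coeff_X_pow]
  generalize ∑ i : Fin (n + 1), (i : ℕ) * I i = w
  by_cases h0 : d = w
  · subst h0
    rw [if_pos ⟨0, by simp⟩, if_neg, if_pos rfl, sub_zero]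
    rintro ⟨a, ha⟩
    push_cast at ha
    nlinarith [mul_nonneg (show (0 : ℤ) ≤ n + 1 by positivity) (show (0 : ℤ) ≤ a by positivity)]
  · rw [if_neg h0, sub_eq_zero]
    refine if_congr ⟨?_, ?_⟩ rfl rfl
    · rintro ⟨a, ha⟩
      cases a with
      | zero => exact absurd (by simpa using ha.symm) h0
      | succ a => exact ⟨a, by push_cast at ha ⊢; linarith⟩
    · rintro ⟨a, ha⟩
      exact ⟨a + 1, by push_cast at ha ⊢; linarith⟩

/-- If `(1 - X) ∑_I X ^ w(I) = (1 - X ^ (n + 1)) R`, then `R` is the generating function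
`(1 - X) ∑_d N_{d,k} X ^ d` of the differences of `N`. -/
lemma kloostermanN_diff (n k : ℕ) (R : ℚ[X])
    (hR : (1 - X) * gaussGen (n + 1) k = (1 - (X : ℚ[X]) ^ (n + 1)) * R) (d : ℕ) :
    (kloostermanN n k d : ℚ) - kloostermanN n k ((d : ℤ) - 1) = R.coeff d := by
  have hc (e : ℕ) : (gaussGen (n + 1) k).coeff e -
      (if 1 ≤ e then (gaussGen (n + 1) k).coeff (e - 1) else 0) =
      R.coeff e - if n + 1 ≤ e then R.coeff (e - (n + 1)) else 0 := by
    have h := congrArg (fun p => coeff p e) hR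
    simp only [sub_mul, one_mul, coeff_sub, mul_comm (X ^ (n + 1)) R, coeff_mul_X_pow'] at h
    rw [← h, ← pow_one (X : ℚ[X]), mul_comm, coeff_mul_X_pow']
  induction d using Nat.strong_induction_on with
  | _ d ih =>
    have h1 := hc d
    have h2 := kloostermanN_sub n k d
    have h3 : (kloostermanN n k ((d : ℤ) - 1) : ℚ) -
        kloostermanN n k ((d : ℤ) - (n + 1 : ℕ) - 1) =
        if 1 ≤ d then (gaussGen (n + 1) k).coeff (d - 1) else 0 := by
      split_ifs with h
      · rw [← kloostermanN_sub]
        push_cast [h]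
        ring_nf
      · rw [kloostermanN_neg _ _ _ (by omega), kloostermanN_neg _ _ _ (by omega)]
        simp
    have h4 : (kloostermanN n k ((d : ℤ) - (n + 1 : ℕ)) : ℚ) -
        kloostermanN n k ((d : ℤ) - (n + 1 : ℕ) - 1) =
        if n + 1 ≤ d then R.coeff (d - (n + 1)) else 0 := by
      split_ifs with h
      · rw [← ih _ (by omega), Nat.cast_sub h]
      · rw [kloostermanN_neg _ _ _ (by omega), kloostermanN_neg _ _ _ (by omega)]
        simp
    linarith

/-- For `n ≥ 1`, `k ≥ 1` with `gcd(k, n+1) = 1`, and `Q = Q_{n,k}` the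
quotient of `∏_{i=1}^{k}(1 - t^{n+i})` by `∏_{i=2}^{k}(1 - t^i)`, for every `0 ≤ d ≤ nk+1`
one has `(N_{d,k} - N_{d-1,k}) - (N_{nk+1-d,k} - N_{nk-d,k}) = q_d`, where `q_d` is the
coefficient of `t^d` in `Q` (an equality in `ℚ`). -/
theorem kloosterman_n_antisymmetry_defect (n k : ℕ) (hn : 1 ≤ n) (hk : 1 ≤ k)
    (hgcd : Nat.gcd k (n + 1) = 1) (Q : Polynomial ℚ)
    (hQ : Q * ∏ i ∈ Finset.Icc 2 k, (1 - (Polynomial.X : Polynomial ℚ) ^ i) =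
      ∏ i ∈ Finset.Icc 1 k, (1 - (Polynomial.X : Polynomial ℚ) ^ (n + i))) :
    ∀ d : ℕ, d ≤ n * k + 1 →
      (((kloostermanN n k d : ℤ) - kloostermanN n k ((d : ℤ) - 1)) -
        ((kloostermanN n k (((n * k + 1 : ℕ) : ℤ) - d) : ℤ) -
          kloostermanN n k (((n * k : ℕ) : ℤ) - d)) : ℚ) = Q.coeff d := by
  obtain ⟨K, rfl⟩ : ∃ K, k = K + 1 := ⟨k - 1, by omega⟩
  have e2 : ∏ i ∈ Finset.Icc 2 (K + 1), (1 - (X : ℚ[X]) ^ i) =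
      ∏ i ∈ Finset.range K, (1 - (X : ℚ[X]) ^ (i + 2)) := by
    rw [← Finset.Ico_add_one_right_eq_Icc, Finset.prod_Ico_eq_prod_range]
    exact Finset.prod_congr rfl fun i _ => by rw [add_comm]
  have e1 : ∏ i ∈ Finset.Icc 1 (K + 1), (1 - (X : ℚ[X]) ^ (n + i)) =
      ∏ i ∈ Finset.range (K + 1), (1 - (X : ℚ[X]) ^ (n + 1 + i)) := by
    rw [← Finset.Ico_add_one_right_eq_Icc, Finset.prod_Ico_eq_prod_range]
    exact Finset.prod_congr rfl fun i _ => by rw [add_assoc]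
  rw [e1, e2] at hQ
  have hA := prod_ne_zero (fun i => i + 2) (fun i => by omega) K
  have hQG : Q = (1 - X) * gaussGen (n + 1) (K + 1) := by
    refine mul_right_cancel₀ hA ?_
    rw [hQ, ← gaussGen_mul_prod, Finset.prod_range_succ']
    simp only [zero_add, pow_one]
    ring
  obtain ⟨R, hR⟩ := dvd_one_sub_mul_gaussGen n K hn hgcd
  have hRP : R * ∏ i ∈ Finset.range K, (1 - (X : ℚ[X]) ^ (i + 2)) =
      ∏ i ∈ Finset.range K, (1 - (X : ℚ[X]) ^ (n + i + 2)) := by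
    refine mul_left_cancel₀ (one_sub_X_pow_ne_zero (Nat.succ_pos n)) ?_
    rw [← mul_assoc, Nat.succ_eq_add_one, ← hR, ← hQG, hQ, Finset.prod_range_succ', mul_comm]
    congr 1
    exact Finset.prod_congr rfl fun i _ => by congr 2; omega
  obtain ⟨hdeg, hrev⟩ := quotient_palindromic n K R hRP
  intro d hd
  have h1 := kloostermanN_diff n (K + 1) R hR d
  have h2 := kloostermanN_diff n (K + 1) R hR (n * (K + 1) + 1 - d)
  have hq : Q.coeff d = R.coeff d - if n + 1 ≤ d then R.coeff (d - (n + 1)) else 0 := by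
    rw [hQG, hR, sub_mul, one_mul, coeff_sub, mul_comm (X ^ (n + 1)) R, coeff_mul_X_pow']
  -- The palindromic symmetry of `R` exchanges the exponents `nk + 1 - d` and `d - (n + 1)`.
  have hsym : R.coeff (n * (K + 1) + 1 - d) =
      if n + 1 ≤ d then R.coeff (d - (n + 1)) else 0 := by
    rw [mul_add, mul_one] at hd ⊢
    split_ifs with h
    · rw [← hrev, coeff_reverse, hdeg, revAt_le (by omega), hrev]
      congr 1
      omega
    · exact coeff_eq_zero_of_natDegree_lt (by omega)
  have hpred : ((n * (K + 1) : ℕ) : ℤ) - d = ((n * (K + 1) + 1 : ℕ) : ℤ) - d - 1 := by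
    push_cast
    ring
  rw [Nat.cast_sub hd, hsym] at h2
  rw [hq, ← h1, ← h2, hpred]
  push_cast
  ring
end

section
/- Let n ≥ 1 and k ≥ 1 be integers, fix a primitive (n+1)-th root of unity ζ ∈ ℂ, and assume that there is no tuple I = (I₀, …, I_n) ∈ ℕ^{n+1} with I₀ + ⋯ + I_n = k and Σ_{i=0}^{n} I_i·ζ^i = 0 (this holds, for example, when n+1 is prime and (n+1) ∤ k, and it implies gcd(k, n+1) = 1). Define θ : P_k → P_k by θ(f) = z·∂f/∂z + D(f). Then θ is injective, its cokernel is a finite-dimensional ℂ-vector space, and (n+1)·dim_ℂ coker(θ) equals the binomial coefficient C(n+k, n). -/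
/-!
Give `z` the weight `n + 1` and `x_i` the weight `i + 1`. Then `D` raises weights by one and
`z ∂/∂z` preserves them, so `D` is the leading part of `θ` for the filtration of `P_k` by the
finite-dimensional spaces `F_w` of elements of weight at most `w`.

`D` is injective on every weight space of `P_k` (`kloostermanD_eq_zero`): a weighted homogeneous
element is determined by its value at `z = 1`, where `D` becomes the derivation permuting the `x_i`
cyclically. In the coordinates `y_j` given by `x_i = Σ_j ζ^{ij} y_j` this derivation multiplies
`y^I` by `Σ_j I_j ζ^j`, which does not vanish when `|I| = k`. Comparing leading parts, `θ` is
injective on `P_k` and `θ f ∈ F_{w+1}` forces `f ∈ F_w` (`mem_filt_of_theta_mem`).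

Let `p_w` be the number of monomials of weight `w` in `P_k`. Injectivity of `D` makes `p_w`
nondecreasing. Multiplication by `z` matches the monomials of weight `w` with the multiples of `z`
of weight `w + n + 1`; as the `C(n+k, n)` monomials free of `z` have bounded weight, `p_w` is
eventually periodic of period `n + 1`, hence eventually constant, with `(n + 1) p_w = C(n+k, n)`
(`mul_ncard_pieceSet`). So `D` is bijective between consecutive weight spaces of large weight, every
class modulo `θ P_k` has a representative of bounded weight, and the cokernel is `F_{w+1} / θ F_w`
for large `w`, of dimension `dim F_{w+1} - dim F_w = p_{w+1}` (`finrank_coker`).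
-/

open MvPolynomial

/-- We model `R = ℂ[z][x₀, …, x_n]` as `MvPolynomial (Fin (n+2)) ℂ`, the variable of index
`0` playing the role of `z` and the variable of index `i+1` playing the role of `x_i`.
These are the values on the variables of the derivation `D` with `D(z) = 0` (so `D` is
`ℂ[z]`-linear), `D(x_i) = x_{i+1}` for `0 ≤ i ≤ n-1`, and `D(x_n) = z·x₀`. -/
noncomputable def kloostermanDvals (n : ℕ) : Fin (n + 2) → MvPolynomial (Fin (n + 2)) ℂ :=
  fun j =>
    if (j : ℕ) = 0 then 0
    else if h : (j : ℕ) + 1 < n + 2 then MvPolynomial.X ⟨(j : ℕ) + 1, h⟩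
    else MvPolynomial.X 0 * MvPolynomial.X 1

/-- The operator `θ(f) = z·∂f/∂z + D(f)`. -/
noncomputable def kloostermanTheta (n : ℕ) :
    MvPolynomial (Fin (n + 2)) ℂ →ₗ[ℂ] MvPolynomial (Fin (n + 2)) ℂ :=
  LinearMap.mulLeft ℂ (MvPolynomial.X 0) ∘ₗ (MvPolynomial.pderiv 0).toLinearMap +
    (MvPolynomial.mkDerivation ℂ (kloostermanDvals n)).toLinearMap

/-- `P_k`: polynomials homogeneous of total degree `k` in the variables `x₀, …, x_n`
(the variable `z` carrying weight `0`). -/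
noncomputable def kloostermanPk (n k : ℕ) : Submodule ℂ (MvPolynomial (Fin (n + 2)) ℂ) :=
  MvPolynomial.weightedHomogeneousSubmodule ℂ (fun j => if (j : ℕ) = 0 then 0 else 1) k

/-! ### The operators and the two gradings -/

/-- The degree in `x₀, …, x_n`, as a weight: `z` has weight `0`, each `x_i` has weight `1`. -/
def xWeight (n : ℕ) : Fin (n + 2) → ℕ := fun j => if (j : ℕ) = 0 then 0 else 1

/-- The weight for which `D` has degree one: `z` has weight `n + 1` and `x_i`, the variable of
index `i + 1`, has weight `i + 1`. (The shift from `i` to `i + 1` makes all weights positive.) -/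
def zWeight (n : ℕ) : Fin (n + 2) → ℕ := fun j => if (j : ℕ) = 0 then n + 1 else j

/-- The derivation `D`. -/
noncomputable def kloostermanD (n : ℕ) :
    Derivation ℂ (MvPolynomial (Fin (n + 2)) ℂ) (MvPolynomial (Fin (n + 2)) ℂ) :=
  MvPolynomial.mkDerivation ℂ (kloostermanDvals n)

/-- The derivation `z ∂/∂z`. -/
noncomputable def kloostermanEuler (n : ℕ) :
    Derivation ℂ (MvPolynomial (Fin (n + 2)) ℂ) (MvPolynomial (Fin (n + 2)) ℂ) :=
  MvPolynomial.mkDerivation ℂ (fun j => if j = 0 then X 0 else 0)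

lemma kloostermanTheta_apply (n : ℕ) (f : MvPolynomial (Fin (n + 2)) ℂ) :
    kloostermanTheta n f = kloostermanEuler n f + kloostermanD n f := by
  have h : kloostermanEuler n = (X 0 : MvPolynomial (Fin (n + 2)) ℂ) • pderiv 0 := by
    apply derivation_ext
    intro i
    by_cases hi : i = 0
    · subst hi; simp [kloostermanEuler, mkDerivation_X]
    · simp [kloostermanEuler, mkDerivation_X, hi, pderiv_X_of_ne hi]
  simp [kloostermanTheta, h, kloostermanD]

/-! ### Derivations and weights -/

/-- A derivation sending each variable `X j` to a form of weight `u j + e` raises weights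
by `e`. -/
lemma mkDerivation_isWeightedHomogeneous {σ : Type*} (u : σ → ℕ) (v : σ → MvPolynomial σ ℂ)
    (e : ℕ) (hv : ∀ j, IsWeightedHomogeneous u (v j) (u j + e)) {f : MvPolynomial σ ℂ} {m : ℕ}
    (hf : IsWeightedHomogeneous u f m) :
    IsWeightedHomogeneous u (mkDerivation ℂ v f) (m + e) := by
  rw [f.as_sum, map_sum]
  refine IsWeightedHomogeneous.sum _ _ _ fun d hd => ?_
  rw [mkDerivation_monomial, smul_eq_C_mul]
  refine IsWeightedHomogeneous.C_mul (IsWeightedHomogeneous.sum _ _ _ fun i hi => ?_) _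
  have hd' : Finsupp.weight u d = m := hf (mem_support_iff.mp hd)
  have h1 := Finsupp.weight_sub_single_add (w := u) (Finsupp.mem_support_iff.mp hi)
  simp only [smul_eq_mul]
  rw [show m + e = Finsupp.weight u (d - Finsupp.single i 1) + (u i + e) by omega]
  exact (isWeightedHomogeneous_monomial u _ _ rfl).mul (hv i)

/-- Such a derivation commutes with taking weighted components, up to the shift by `e`. -/
lemma component_mkDerivation {σ : Type*} (u : σ → ℕ) (v : σ → MvPolynomial σ ℂ)
    (e : ℕ) (hv : ∀ j, IsWeightedHomogeneous u (v j) (u j + e)) (f : MvPolynomial σ ℂ) (m : ℕ) :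
    weightedHomogeneousComponent u (m + e) (mkDerivation ℂ v f) =
      mkDerivation ℂ v (weightedHomogeneousComponent u m f) := by
  induction f using MvPolynomial.induction_on' with
  | add p q hp hq => simp only [map_add, hp, hq]
  | monomial d c =>
    have h0 := isWeightedHomogeneous_monomial u d c rfl
    have h1 := mkDerivation_isWeightedHomogeneous u v e hv h0
    by_cases h : Finsupp.weight u d = m
    · subst h
      rw [h0.weightedHomogeneousComponent_same, h1.weightedHomogeneousComponent_same]
    · rw [h0.weightedHomogeneousComponent_ne _ (Ne.symm h),
        h1.weightedHomogeneousComponent_ne _ (by omega), map_zero]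

lemma kloostermanDvals_xWeight (n : ℕ) (j : Fin (n + 2)) :
    IsWeightedHomogeneous (xWeight n) (kloostermanDvals n j) (xWeight n j + 0) := by
  unfold kloostermanDvals
  split_ifs with h h'
  · exact isWeightedHomogeneous_zero ℂ _ _
  · convert isWeightedHomogeneous_X ℂ (xWeight n) _ using 1
    simp [xWeight, h]
  · convert (isWeightedHomogeneous_X ℂ (xWeight n) 0).mul
      (isWeightedHomogeneous_X ℂ (xWeight n) 1) using 1
    simp [xWeight, h]

lemma kloostermanDvals_zWeight (n : ℕ) (j : Fin (n + 2)) :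
    IsWeightedHomogeneous (zWeight n) (kloostermanDvals n j) (zWeight n j + 1) := by
  unfold kloostermanDvals
  split_ifs with h h'
  · exact isWeightedHomogeneous_zero ℂ _ _
  · convert isWeightedHomogeneous_X ℂ (zWeight n) _ using 1
    simp [zWeight, h]
  · convert (isWeightedHomogeneous_X ℂ (zWeight n) 0).mul
      (isWeightedHomogeneous_X ℂ (zWeight n) 1) using 1
    have : (j : ℕ) = n + 1 := by omega
    simp [zWeight, this]

lemma eulerVals_isWeightedHomogeneous (n : ℕ) (u : Fin (n + 2) → ℕ) (j : Fin (n + 2)) :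
    IsWeightedHomogeneous u
      (if j = 0 then X 0 else 0 : MvPolynomial (Fin (n + 2)) ℂ) (u j + 0) := by
  split_ifs with h
  · subst h; exact isWeightedHomogeneous_X ℂ u 0
  · exact isWeightedHomogeneous_zero ℂ _ _

/-! ### Injectivity of `D` -/

/-- The eigenvalue of a monomial under the diagonal derivation `y_j ↦ ζ^j y_j`. -/
lemma coeff_diagonal_derivation {m : ℕ} (ζ : ℂ) (g : MvPolynomial (Fin m) ℂ)
    (s : Fin m →₀ ℕ) :
    coeff s (mkDerivation ℂ (fun j : Fin m => C (ζ ^ (j : ℕ)) * X j) g) =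
      (∑ i, (s i : ℂ) * ζ ^ (i : ℕ)) * coeff s g := by
  have key : ∀ (d : Fin m →₀ ℕ) (c : ℂ),
      mkDerivation ℂ (fun j : Fin m => C (ζ ^ (j : ℕ)) * X j) (monomial d c) =
        monomial d ((∑ i, (d i : ℂ) * ζ ^ (i : ℕ)) * c) := by
    intro d c
    rw [mkDerivation_monomial, Finsupp.sum, Finset.sum_mul, map_sum, Finset.smul_sum]
    rw [← Finset.sum_subset (Finset.subset_univ d.support)]
    · refine Finset.sum_congr rfl fun i hi => ?_
      have hle : Finsupp.single i 1 ≤ d := by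
        rw [Finsupp.single_le_iff]
        exact Nat.one_le_iff_ne_zero.mpr (Finsupp.mem_support_iff.mp hi)
      rw [C_mul_X_eq_monomial, smul_eq_mul, monomial_mul, tsub_add_cancel_of_le hle,
        smul_monomial, smul_eq_mul, mul_comm]
    · intro i _ hi
      simp [Finsupp.notMem_support_iff.mp hi]
  induction g using MvPolynomial.induction_on' with
  | add p q hp hq => simp only [map_add, coeff_add, hp, hq, mul_add]
  | monomial d c =>
    rw [key, coeff_monomial, coeff_monomial]
    split_ifs with h
    · rw [h]
    · simp

/-- Substitution `z ↦ 1`, `x_i ↦ Σ_j ζ^{ij} y_j`, which diagonalises `D`. -/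
noncomputable def toEigen (n : ℕ) (ζ : ℂ) :
    MvPolynomial (Fin (n + 2)) ℂ →ₐ[ℂ] MvPolynomial (Fin (n + 1)) ℂ :=
  aeval (Fin.cons 1 fun i : Fin (n + 1) => ∑ j : Fin (n + 1), C (ζ ^ ((i : ℕ) * j)) * X j)

/-- Substitution `y_j ↦ (n+1)⁻¹ Σ_i ζ^{-ij} x_i`, inverse to `toEigen` up to setting `z = 1`. -/
noncomputable def ofEigen (n : ℕ) (ζ : ℂ) :
    MvPolynomial (Fin (n + 1)) ℂ →ₐ[ℂ] MvPolynomial (Fin (n + 2)) ℂ :=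
  aeval fun j : Fin (n + 1) =>
    ∑ l : Fin (n + 1), C (((n : ℂ) + 1)⁻¹ * (ζ⁻¹) ^ ((l : ℕ) * j)) * X l.succ

lemma toEigen_D (n : ℕ) (ζ : ℂ) (hζ : ζ ^ (n + 1) = 1) (f : MvPolynomial (Fin (n + 2)) ℂ) :
    toEigen n ζ (kloostermanD n f) =
      mkDerivation ℂ (fun j : Fin (n + 1) => C (ζ ^ (j : ℕ)) * X j) (toEigen n ζ f) := by
  induction f using MvPolynomial.induction_on with
  | C a => simp [toEigen, algebraMap_eq]
  | add p q hp hq => simp only [map_add, hp, hq]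
  | mul_X p i hp =>
    have hX : toEigen n ζ (kloostermanD n (X i)) =
        mkDerivation ℂ (fun j : Fin (n + 1) => C (ζ ^ (j : ℕ)) * X j) (toEigen n ζ (X i)) := by
      rw [kloostermanD, mkDerivation_X]
      refine Fin.cases ?_ (fun i => ?_) i
      · simp [toEigen, kloostermanDvals]
      · have hr : mkDerivation ℂ (fun j : Fin (n + 1) => C (ζ ^ (j : ℕ)) * X j)
              (toEigen n ζ (X i.succ)) =
            ∑ j : Fin (n + 1), C (ζ ^ (((i : ℕ) + 1) * j)) * X j := by
          simp only [toEigen, aeval_X, Fin.cons_succ, map_sum]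
          refine Finset.sum_congr rfl fun j _ => ?_
          rw [Derivation.leibniz, mkDerivation_X, derivation_C, smul_zero, add_zero, smul_eq_mul,
            ← mul_assoc, ← C_mul, add_mul, pow_add, one_mul]
        rw [hr]
        unfold kloostermanDvals
        have h0 : ¬ ((i.succ : Fin (n + 2)) : ℕ) = 0 := by simp
        rw [if_neg h0]
        split_ifs with h'
        · have : (⟨(i.succ : ℕ) + 1, h'⟩ : Fin (n + 2)) =
              Fin.succ ⟨(i : ℕ) + 1, by simpa using h'⟩ := by ext; simp
          rw [this, toEigen, aeval_X, Fin.cons_succ]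
        · have hi : (i : ℕ) = n := by
            have := i.2
            simp only [Fin.val_succ] at h'
            omega
          rw [map_mul, show (1 : Fin (n + 2)) = Fin.succ 0 from rfl]
          simp [toEigen, hi, pow_mul, hζ]
    simp only [Derivation.leibniz, smul_eq_mul, map_add, map_mul, hp, hX]

lemma ofEigen_toEigen (n : ℕ) (ζ : ℂ) (hζ : IsPrimitiveRoot ζ (n + 1))
    (f : MvPolynomial (Fin (n + 2)) ℂ) :
    ofEigen n ζ (toEigen n ζ f) = aeval (Fin.cons 1 fun i : Fin (n + 1) => X i.succ) f := by
  have hζ0 : ζ ≠ 0 := hζ.ne_zero (by omega)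
  have hn : ((n : ℂ) + 1) ≠ 0 := by exact_mod_cast Nat.succ_ne_zero n
  -- orthogonality of the characters of the cyclic group
  have orth : ∀ i l : Fin (n + 1),
      ∑ j : Fin (n + 1), ζ ^ ((i : ℕ) * j) * (ζ⁻¹) ^ ((l : ℕ) * j) =
        if l = i then (n : ℂ) + 1 else 0 := by
    intro i l
    have h1 : ∀ j : Fin (n + 1), ζ ^ ((i : ℕ) * j) * (ζ⁻¹) ^ ((l : ℕ) * j) =
        (ζ ^ (i : ℕ) * (ζ⁻¹) ^ (l : ℕ)) ^ (j : ℕ) := by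
      intro j; rw [mul_pow, pow_mul, pow_mul]
    simp_rw [h1]
    split_ifs with h
    · subst h
      simp [hζ0]
    · rw [Fin.sum_univ_eq_sum_range (fun j => (ζ ^ (i : ℕ) * (ζ⁻¹) ^ (l : ℕ)) ^ j) (n + 1)]
      have hne : ζ ^ (i : ℕ) * (ζ⁻¹) ^ (l : ℕ) ≠ 1 := by
        rw [inv_pow, ← div_eq_mul_inv, Ne, div_eq_one_iff_eq (pow_ne_zero _ hζ0)]
        intro h2
        exact h (Fin.ext (hζ.pow_inj i.2 l.2 h2).symm)
      rw [geom_sum_eq hne, mul_pow, ← pow_mul, ← pow_mul, mul_comm (i : ℕ), mul_comm (l : ℕ),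
        pow_mul, pow_mul, inv_pow, hζ.pow_eq_one]
      simp
  have : (ofEigen n ζ).comp (toEigen n ζ) =
      aeval (Fin.cons 1 fun i : Fin (n + 1) => X i.succ) := by
    apply algHom_ext
    refine Fin.cases ?_ fun i => ?_
    · simp [toEigen]
    · simp only [AlgHom.comp_apply, toEigen, aeval_X, Fin.cons_succ, map_sum, map_mul, ofEigen,
        ← algebraMap_eq, AlgHom.commutes, Finset.mul_sum]
      rw [Finset.sum_comm]
      simp only [algebraMap_eq, ← mul_assoc, ← C_mul, ← Finset.sum_mul, ← map_sum]
      have h2 : ∀ l : Fin (n + 1), ∑ j : Fin (n + 1), ζ ^ ((i : ℕ) * j) * ((n : ℂ) + 1)⁻¹ *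
          (ζ⁻¹) ^ ((l : ℕ) * j) = if l = i then 1 else 0 := by
        intro l
        have : ∀ j : Fin (n + 1), ζ ^ ((i : ℕ) * j) * ((n : ℂ) + 1)⁻¹ * (ζ⁻¹) ^ ((l : ℕ) * j) =
            ((n : ℂ) + 1)⁻¹ * (ζ ^ ((i : ℕ) * j) * (ζ⁻¹) ^ ((l : ℕ) * j)) := by
          intro j; ring
        simp_rw [this, ← Finset.mul_sum, orth]
        split_ifs <;> simp [hn]
      simp_rw [h2]
      simp
  rw [← this, AlgHom.comp_apply]

lemma toEigen_isHomogeneous (n k : ℕ) (ζ : ℂ) {f : MvPolynomial (Fin (n + 2)) ℂ}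
    (hf : IsWeightedHomogeneous (xWeight n) f k) : (toEigen n ζ f).IsHomogeneous k := by
  rw [f.as_sum, map_sum]
  refine IsHomogeneous.sum _ _ _ fun d hd => ?_
  have hd' : Finsupp.weight (xWeight n) d = k := hf (mem_support_iff.mp hd)
  rw [toEigen, aeval_monomial, algebraMap_eq, Finsupp.prod_fintype _ _ (by simp),
    show k = 0 + ∑ i, xWeight n i * d i by
      rw [← hd', Finsupp.weight_eq_sum]; simp [mul_comm]]
  refine (isHomogeneous_C _ _).mul (IsHomogeneous.prod _ _ _ fun i _ => ?_)
  refine IsHomogeneous.pow ?_ _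
  refine Fin.cases ?_ (fun i => ?_) i
  · simpa [xWeight] using isHomogeneous_one _ _
  · simp only [Fin.cons_succ]
    refine IsHomogeneous.sum _ _ _ fun j _ => ?_
    simpa [xWeight] using (isHomogeneous_C_mul_X (ζ ^ ((i : ℕ) * j)) j)

/-- A form homogeneous for `zWeight` is determined by its value at `z = 1`, since the exponent
of `z` in each monomial can be recovered from the weight. -/
lemma eq_zero_of_dehomogenize (n w : ℕ) {f : MvPolynomial (Fin (n + 2)) ℂ}
    (hf : IsWeightedHomogeneous (zWeight n) f w)
    (h : aeval (R := ℂ) (Fin.cons 1 fun i : Fin (n + 1) =>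
      (X i.succ : MvPolynomial (Fin (n + 2)) ℂ)) f = 0) : f = 0 := by
  have hmon : ∀ (d : Fin (n + 2) →₀ ℕ) (c : ℂ), aeval (R := ℂ) (Fin.cons 1 fun i : Fin (n + 1) =>
      (X i.succ : MvPolynomial (Fin (n + 2)) ℂ)) (monomial d c) = monomial (d.erase 0) c := by
    intro d c
    rw [aeval_monomial, algebraMap_eq, monomial_eq, Finsupp.prod_fintype _ _ (by simp),
      Finsupp.prod_fintype _ _ (by simp)]
    congr 1
    refine Finset.prod_congr rfl fun i _ => ?_
    refine Fin.cases ?_ (fun i => ?_) i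
    · simp
    · rw [Fin.cons_succ, Finsupp.erase_ne (Fin.succ_ne_zero i)]
  by_contra hne
  obtain ⟨d₀, hd₀⟩ := ne_zero_iff.mp hne
  have hw : ∀ d ∈ f.support, d.erase 0 = d₀.erase 0 → d = d₀ := by
    intro d hd he
    have e1 : Finsupp.weight (zWeight n) d = w := hf (mem_support_iff.mp hd)
    have e2 : Finsupp.weight (zWeight n) d₀ = w := hf hd₀
    have h3 : ∀ e : Fin (n + 2) →₀ ℕ, Finsupp.weight (zWeight n) e =
        e 0 * (n + 1) + Finsupp.weight (zWeight n) (e.erase 0) := by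
      intro e
      conv_lhs => rw [← Finsupp.single_add_erase 0 e, map_add, Finsupp.weight_single]
      simp [zWeight]
    rw [h3] at e1 e2
    rw [he] at e1
    have h4 : d 0 = d₀ 0 := Nat.eq_of_mul_eq_mul_right (show 0 < n + 1 by omega) (by omega)
    rw [← Finsupp.single_add_erase 0 d, ← Finsupp.single_add_erase 0 d₀, he, h4]
  have hc := congrArg (coeff (d₀.erase 0)) h
  rw [f.as_sum, map_sum, coeff_sum, Finset.sum_eq_single d₀] at hc
  · rw [hmon, coeff_monomial, if_pos rfl] at hc
    exact hd₀ (by simpa using hc)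
  · intro d hd hdne
    rw [hmon, coeff_monomial, if_neg fun he => hdne (hw d hd he)]
  · intro hd
    rw [hmon, notMem_support_iff.mp hd]; simp

/-- `D` has no kernel among the bihomogeneous elements of `P_k`: at `z = 1` it is diagonalisable
with eigenvalues `Σ I_i ζ^i`, `|I| = k`, which are nonzero by hypothesis. -/
lemma kloostermanD_eq_zero (n k w : ℕ) (ζ : ℂ) (hζ : IsPrimitiveRoot ζ (n + 1))
    (hno : ¬∃ I : Fin (n + 1) → ℕ,
      (∑ i, I i) = k ∧ (∑ i : Fin (n + 1), (I i : ℂ) * ζ ^ (i : ℕ)) = 0)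
    {f : MvPolynomial (Fin (n + 2)) ℂ} (hfk : IsWeightedHomogeneous (xWeight n) f k)
    (hfw : IsWeightedHomogeneous (zWeight n) f w) (hD : kloostermanD n f = 0) : f = 0 := by
  refine eq_zero_of_dehomogenize n w hfw ?_
  rw [← ofEigen_toEigen n ζ hζ]
  suffices h : toEigen n ζ f = 0 by rw [h, map_zero]
  have h1 := toEigen_D n ζ hζ.pow_eq_one f
  rw [hD, map_zero] at h1
  ext s
  have h2 := coeff_diagonal_derivation ζ (toEigen n ζ f) s
  rw [← h1, coeff_zero] at h2
  rcases mul_eq_zero.mp h2.symm with h3 | h3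
  · by_contra hs
    refine hno ⟨s, ?_, h3⟩
    rw [← Finsupp.degree_eq_sum, Finsupp.degree_eq_weight_one]
    exact toEigen_isHomogeneous n k ζ hfk (by simpa using hs)
  · simpa using h3

/-! ### The filtration of `P_k` by weight -/

/-- The exponents of the monomials of `P_k` of weight at most `w`. -/
def filtSet (n k w : ℕ) : Set (Fin (n + 2) →₀ ℕ) :=
  {d | Finsupp.weight (xWeight n) d = k ∧ Finsupp.weight (zWeight n) d ≤ w}

/-- The exponents of the monomials of `P_k` of weight exactly `w`. -/
def pieceSet (n k w : ℕ) : Set (Fin (n + 2) →₀ ℕ) :=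
  {d | Finsupp.weight (xWeight n) d = k ∧ Finsupp.weight (zWeight n) d = w}

/-- The elements of `P_k` of weight at most `w`. -/
noncomputable def filt (n k w : ℕ) : Submodule ℂ (MvPolynomial (Fin (n + 2)) ℂ) :=
  restrictSupport ℂ (filtSet n k w)

/-- The elements of `P_k` homogeneous of weight `w`. -/
noncomputable def piece (n k w : ℕ) : Submodule ℂ (MvPolynomial (Fin (n + 2)) ℂ) :=
  restrictSupport ℂ (pieceSet n k w)

lemma mem_filt {n k w : ℕ} {f : MvPolynomial (Fin (n + 2)) ℂ} :
    f ∈ filt n k w ↔ IsWeightedHomogeneous (xWeight n) f k ∧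
      ∀ d, coeff d f ≠ 0 → Finsupp.weight (zWeight n) d ≤ w := by
  simp only [filt, mem_restrictSupport_iff, Set.subset_def, Finset.mem_coe, mem_support_iff,
    filtSet, Set.mem_ofPred_eq, IsWeightedHomogeneous]
  exact ⟨fun h => ⟨fun {d} hd => (h d hd).1, fun d hd => (h d hd).2⟩,
    fun h d hd => ⟨h.1 hd, h.2 d hd⟩⟩

lemma mem_piece {n k w : ℕ} {f : MvPolynomial (Fin (n + 2)) ℂ} :
    f ∈ piece n k w ↔ IsWeightedHomogeneous (xWeight n) f k ∧
      IsWeightedHomogeneous (zWeight n) f w := by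
  simp only [piece, mem_restrictSupport_iff, Set.subset_def, Finset.mem_coe, mem_support_iff,
    pieceSet, Set.mem_ofPred_eq, IsWeightedHomogeneous]
  exact ⟨fun h => ⟨fun {d} hd => (h d hd).1, fun {d} hd => (h d hd).2⟩,
    fun h d hd => ⟨h.1 hd, h.2 hd⟩⟩

lemma mem_kloostermanPk {n k : ℕ} {f : MvPolynomial (Fin (n + 2)) ℂ} :
    f ∈ kloostermanPk n k ↔ IsWeightedHomogeneous (xWeight n) f k := Iff.rfl

lemma filt_le_Pk (n k w : ℕ) : filt n k w ≤ kloostermanPk n k := fun _ hf => (mem_filt.mp hf).1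

lemma filt_mono (n k : ℕ) {v w : ℕ} (h : v ≤ w) : filt n k v ≤ filt n k w :=
  restrictSupport_mono ℂ fun _ hd => ⟨hd.1, hd.2.trans h⟩

lemma piece_le_filt (n k w : ℕ) : piece n k w ≤ filt n k w :=
  restrictSupport_mono ℂ fun _ hd => ⟨hd.1, hd.2.le⟩

lemma exists_mem_filt {n k : ℕ} {f : MvPolynomial (Fin (n + 2)) ℂ} (hf : f ∈ kloostermanPk n k) :
    ∃ w, f ∈ filt n k w :=
  ⟨weightedTotalDegree (zWeight n) f, mem_filt.mpr ⟨hf, fun _ hd =>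
    le_weightedTotalDegree _ (mem_support_iff.mpr hd)⟩⟩

lemma component_mem_piece {n k : ℕ} (w : ℕ) {f : MvPolynomial (Fin (n + 2)) ℂ}
    (hf : f ∈ kloostermanPk n k) : weightedHomogeneousComponent (zWeight n) w f ∈ piece n k w := by
  refine mem_piece.mpr ⟨fun {d} hd => ?_, ?_⟩
  swap
  · exact weightedHomogeneousComponent_isWeightedHomogeneous _ _
  rw [coeff_weightedHomogeneousComponent] at hd
  split_ifs at hd with h
  · exact hf hd
  · exact absurd rfl hd

lemma mem_filt_of_component_eq_zero {n k w : ℕ} {f : MvPolynomial (Fin (n + 2)) ℂ}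
    (hf : f ∈ filt n k (w + 1)) (h : weightedHomogeneousComponent (zWeight n) (w + 1) f = 0) :
    f ∈ filt n k w := by
  rw [mem_filt] at hf ⊢
  refine ⟨hf.1, fun d hd => ?_⟩
  have h1 := hf.2 d hd
  by_contra h2
  have h3 := coeff_weightedHomogeneousComponent (w := zWeight n) (w + 1) f d
  rw [if_pos (by omega), h, coeff_zero] at h3
  exact hd h3.symm

lemma component_eq_zero_of_mem_filt {n k w m : ℕ} {f : MvPolynomial (Fin (n + 2)) ℂ}
    (hf : f ∈ filt n k w) (hm : w < m) : weightedHomogeneousComponent (zWeight n) m f = 0 := by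
  refine weightedHomogeneousComponent_eq_zero' _ _ fun d hd => ?_
  have := (mem_filt.mp hf).2 d (mem_support_iff.mp hd)
  omega

lemma kloostermanTheta_mem_Pk {n k : ℕ} {f : MvPolynomial (Fin (n + 2)) ℂ}
    (hf : f ∈ kloostermanPk n k) : kloostermanTheta n f ∈ kloostermanPk n k := by
  rw [kloostermanTheta_apply]
  exact add_mem
    (mkDerivation_isWeightedHomogeneous _ _ 0 (eulerVals_isWeightedHomogeneous n _) hf)
    (mkDerivation_isWeightedHomogeneous _ _ 0 (kloostermanDvals_xWeight n) hf)

lemma kloostermanD_mem_piece {n k w : ℕ} {f : MvPolynomial (Fin (n + 2)) ℂ}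
    (hf : f ∈ piece n k w) : kloostermanD n f ∈ piece n k (w + 1) := by
  rw [mem_piece] at hf ⊢
  exact ⟨mkDerivation_isWeightedHomogeneous _ _ 0 (kloostermanDvals_xWeight n) hf.1,
    mkDerivation_isWeightedHomogeneous _ _ 1 (kloostermanDvals_zWeight n) hf.2⟩

/-- The weight `m + 1` part of `θ f`. -/
lemma component_kloostermanTheta (n m : ℕ) (f : MvPolynomial (Fin (n + 2)) ℂ) :
    weightedHomogeneousComponent (zWeight n) (m + 1) (kloostermanTheta n f) =
      kloostermanEuler n (weightedHomogeneousComponent (zWeight n) (m + 1) f) +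
        kloostermanD n (weightedHomogeneousComponent (zWeight n) m f) := by
  rw [kloostermanTheta_apply, map_add]
  congr 1
  · exact component_mkDerivation _ _ 0 (eulerVals_isWeightedHomogeneous n _) f (m + 1)
  · exact component_mkDerivation _ _ 1 (kloostermanDvals_zWeight n) f m

lemma kloostermanTheta_mem_filt {n k w : ℕ} {f : MvPolynomial (Fin (n + 2)) ℂ}
    (hf : f ∈ filt n k w) : kloostermanTheta n f ∈ filt n k (w + 1) := by
  refine mem_filt.mpr ⟨kloostermanTheta_mem_Pk (filt_le_Pk _ _ _ hf), fun d hd => ?_⟩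
  by_contra h
  obtain ⟨m, hm⟩ : ∃ m, Finsupp.weight (zWeight n) d = m + 1 :=
    ⟨Finsupp.weight (zWeight n) d - 1, by omega⟩
  have h1 := coeff_weightedHomogeneousComponent (w := zWeight n) (m + 1) (kloostermanTheta n f) d
  rw [if_pos hm, component_kloostermanTheta, component_eq_zero_of_mem_filt hf (by omega),
    component_eq_zero_of_mem_filt hf (by omega), map_zero, map_zero, add_zero, coeff_zero] at h1
  exact hd h1.symm

/-! ### `θ` is strict for the filtration -/

section Strict

variable {n k : ℕ}

/-- The part of `θ f` in weight `m + 1` is `D` of the leading part of `f`, so the latter vanishes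
once `θ f` has weight at most `m`. -/
lemma component_eq_zero_of_theta_mem
    (hD : ∀ w, ∀ f ∈ piece n k w, kloostermanD n f = 0 → f = 0) {m : ℕ}
    {f : MvPolynomial (Fin (n + 2)) ℂ} (hf : f ∈ filt n k m)
    (hθ : kloostermanTheta n f ∈ filt n k m) :
    weightedHomogeneousComponent (zWeight n) m f = 0 := by
  refine hD m _ (component_mem_piece m (filt_le_Pk _ _ _ hf)) ?_
  have h := component_kloostermanTheta n m f
  rw [component_eq_zero_of_mem_filt hθ (by omega), component_eq_zero_of_mem_filt hf (by omega),
    map_zero, zero_add] at h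
  exact h.symm

lemma mem_filt_of_theta_mem
    (hD : ∀ w, ∀ f ∈ piece n k w, kloostermanD n f = 0 → f = 0) {W : ℕ}
    {f : MvPolynomial (Fin (n + 2)) ℂ} (hf : f ∈ kloostermanPk n k)
    (hθ : kloostermanTheta n f ∈ filt n k (W + 1)) : f ∈ filt n k W := by
  obtain ⟨m, hm⟩ := exists_mem_filt hf
  induction m with
  | zero => exact filt_mono n k (Nat.zero_le W) hm
  | succ m ih =>
    by_cases h : m + 1 ≤ W
    · exact filt_mono n k h hm
    · exact ih (mem_filt_of_component_eq_zero hm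
        (component_eq_zero_of_theta_mem hD hm (filt_mono n k (by omega) hθ)))

lemma kloostermanTheta_eq_zero
    (hD : ∀ w, ∀ f ∈ piece n k w, kloostermanD n f = 0 → f = 0)
    {f : MvPolynomial (Fin (n + 2)) ℂ} (hf : f ∈ kloostermanPk n k)
    (hθ : kloostermanTheta n f = 0) : f = 0 := by
  have h0 : f ∈ filt n k 0 := mem_filt_of_theta_mem hD hf (by rw [hθ]; exact zero_mem _)
  have h1 := component_eq_zero_of_theta_mem hD h0 (by rw [hθ]; exact zero_mem _)
  have h2 : IsWeightedHomogeneous (zWeight n) f 0 := fun {d} hd =>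
    Nat.le_zero.mp ((mem_filt.mp h0).2 d hd)
  rw [← h2.weightedHomogeneousComponent_same, h1]

/-- If `D` is onto in weights above `W`, then every class in the cokernel of `θ` has a
representative of weight at most `W + 1`. -/
lemma exists_sub_theta_mem {W : ℕ}
    (hsurj : ∀ m, W ≤ m → ∀ g ∈ piece n k (m + 1), ∃ f ∈ piece n k m, kloostermanD n f = g)
    {f : MvPolynomial (Fin (n + 2)) ℂ} (hf : f ∈ kloostermanPk n k) :
    ∃ g ∈ kloostermanPk n k, f - kloostermanTheta n g ∈ filt n k (W + 1) := by
  obtain ⟨m, hm⟩ := exists_mem_filt hf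
  induction m generalizing f with
  | zero => exact ⟨0, zero_mem _, by simpa using filt_mono n k (Nat.zero_le _) hm⟩
  | succ m ih =>
    by_cases h : m ≤ W
    · exact ⟨0, zero_mem _, by simpa using filt_mono n k (by omega : m + 1 ≤ W + 1) hm⟩
    obtain ⟨g, hg, hgf⟩ := hsurj m (by omega) _ (component_mem_piece (m + 1) hf)
    have hg' := piece_le_filt n k m hg
    have hgP := filt_le_Pk _ _ _ hg'
    have hmem : f - kloostermanTheta n g ∈ filt n k m := by
      refine mem_filt_of_component_eq_zero (sub_mem hm (kloostermanTheta_mem_filt hg')) ?_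
      rw [map_sub, component_kloostermanTheta, component_eq_zero_of_mem_filt hg' (by omega),
        (mem_piece.mp hg).2.weightedHomogeneousComponent_same, hgf, map_zero, zero_add, sub_self]
    obtain ⟨g', hg'P, h'⟩ := ih (filt_le_Pk _ _ _ hmem) hmem
    exact ⟨g + g', add_mem hgP hg'P, by rwa [map_add, ← sub_sub]⟩

end Strict

/-! ### Counting monomials -/

lemma zWeight_ne_zero (n : ℕ) (j : Fin (n + 2)) : zWeight n j ≠ 0 := by
  unfold zWeight; split_ifs with h <;> omega

lemma filtSet_finite (n k w : ℕ) : (filtSet n k w).Finite :=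
  (Finsupp.finite_of_nat_weight_le (zWeight n) (zWeight_ne_zero n) w).subset fun _ h => h.2

lemma pieceSet_finite (n k w : ℕ) : (pieceSet n k w).Finite :=
  (filtSet_finite n k w).subset fun _ h => ⟨h.1, h.2.le⟩

instance filt_finiteDimensional (n k w : ℕ) : FiniteDimensional ℂ (filt n k w) :=
  haveI := (filtSet_finite n k w).to_subtype
  Module.Finite.of_basis (basisRestrictSupport ℂ (filtSet n k w))

instance piece_finiteDimensional (n k w : ℕ) : FiniteDimensional ℂ (piece n k w) :=
  haveI := (pieceSet_finite n k w).to_subtype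
  Module.Finite.of_basis (basisRestrictSupport ℂ (pieceSet n k w))

lemma finrank_filt (n k w : ℕ) : Module.finrank ℂ (filt n k w) = (filtSet n k w).ncard :=
  Module.finrank_eq_nat_card_basis (basisRestrictSupport ℂ (filtSet n k w))

lemma finrank_piece (n k w : ℕ) : Module.finrank ℂ (piece n k w) = (pieceSet n k w).ncard :=
  Module.finrank_eq_nat_card_basis (basisRestrictSupport ℂ (pieceSet n k w))

lemma ncard_filtSet_succ (n k w : ℕ) :
    (filtSet n k (w + 1)).ncard = (filtSet n k w).ncard + (pieceSet n k (w + 1)).ncard := by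
  rw [← Set.ncard_union_eq _ (filtSet_finite _ _ _) (pieceSet_finite _ _ _)]
  · congr 1
    ext d
    simp only [filtSet, pieceSet, Set.mem_union, Set.mem_ofPred_eq, ← and_or_left,
      Nat.le_succ_iff]
  · rw [Set.disjoint_left]
    rintro d ⟨_, h1⟩ ⟨_, h2⟩
    omega

lemma ncard_monomials (n k : ℕ) :
    {d : Fin (n + 2) →₀ ℕ | d 0 = 0 ∧ Finsupp.weight (xWeight n) d = k}.ncard =
      (n + k).choose n := by
  have h : {d : Fin (n + 2) →₀ ℕ | d 0 = 0 ∧ Finsupp.weight (xWeight n) d = k} =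
      ((Finset.univ.erase (0 : Fin (n + 2))).finsuppAntidiag k : Set (Fin (n + 2) →₀ ℕ)) := by
    ext d
    simp only [Set.mem_ofPred_eq, Finset.mem_coe, Finset.mem_finsuppAntidiag]
    have h1 : Finsupp.weight (xWeight n) d = ∑ i ∈ Finset.univ.erase (0 : Fin (n + 2)), d i := by
      rw [Finsupp.weight_eq_sum, ← Finset.add_sum_erase _ _ (Finset.mem_univ (0 : Fin (n + 2)))]
      simp only [xWeight, Fin.val_zero, if_true, smul_zero, zero_add]
      refine Finset.sum_congr rfl fun i hi => ?_
      rw [if_neg, smul_eq_mul, mul_one]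
      exact fun h => (Finset.mem_erase.mp hi).1 (Fin.ext h)
    rw [h1, and_comm]
    refine and_congr_right fun _ => ⟨fun h0 i hi => ?_, fun hs => ?_⟩
    · refine Finset.mem_erase.mpr ⟨?_, Finset.mem_univ _⟩
      rintro rfl
      exact Finsupp.mem_support_iff.mp hi h0
    · by_contra h0
      exact (Finset.mem_erase.mp (hs (Finsupp.mem_support_iff.mpr h0))).1 rfl
  rw [h, Set.ncard_coe_finset, Finset.card_finsuppAntidiag_nat_eq_choose,
    Finset.card_erase_of_mem (Finset.mem_univ _), Finset.card_univ, Fintype.card_fin,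
    show n + 2 - 1 + k - 1 = n + k by omega, Nat.choose_symm_add]

/-- For large weights, the monomials of weight at most `w + (n + 1)` are `z` times those of weight
at most `w`, together with all the monomials free of `z`. -/
lemma ncard_filtSet_add (n k w : ℕ) (hw : (n + 1) * k ≤ w + (n + 1)) :
    (filtSet n k (w + (n + 1))).ncard = (filtSet n k w).ncard + (n + k).choose n := by
  have hbound : ∀ d : Fin (n + 2) →₀ ℕ, d 0 = 0 →
      Finsupp.weight (zWeight n) d ≤ (n + 1) * Finsupp.weight (xWeight n) d := by
    intro d h0
    rw [Finsupp.weight_eq_sum, Finsupp.weight_eq_sum, Finset.mul_sum]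
    refine Finset.sum_le_sum fun i _ => ?_
    by_cases hi : (i : ℕ) = 0
    · have : i = 0 := Fin.ext hi
      subst this
      simp [h0]
    · simp only [zWeight, xWeight, if_neg hi, smul_eq_mul, mul_one]
      rw [mul_comm]
      exact Nat.mul_le_mul_right _ (by omega)
  have hx : Finsupp.weight (xWeight n) (Finsupp.single 0 1) = 0 := by
    rw [Finsupp.weight_single]; simp [xWeight]
  have hz : Finsupp.weight (zWeight n) (Finsupp.single 0 1) = n + 1 := by
    rw [Finsupp.weight_single]; simp [zWeight]
  have hun : filtSet n k (w + (n + 1)) = (fun d => d + Finsupp.single 0 1) '' filtSet n k w ∪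
      {d : Fin (n + 2) →₀ ℕ | d 0 = 0 ∧ Finsupp.weight (xWeight n) d = k} := by
    ext d
    constructor
    · rintro ⟨h1, h2⟩
      by_cases h0 : d 0 = 0
      · exact Or.inr ⟨h0, h1⟩
      · left
        have hle : Finsupp.single 0 1 ≤ d := by
          rw [Finsupp.single_le_iff]; omega
        have he : d - Finsupp.single 0 1 + Finsupp.single 0 1 = d := tsub_add_cancel_of_le hle
        refine ⟨d - Finsupp.single 0 1, ⟨?_, ?_⟩, he⟩
        · rw [← he, map_add, hx] at h1; exact h1
        · rw [← he, map_add, hz] at h2; omega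
    · rintro (⟨e, ⟨h1, h2⟩, rfl⟩ | ⟨h0, h1⟩)
      · exact ⟨by simp only [map_add, hx, h1, add_zero], by simp only [map_add, hz]; omega⟩
      · refine ⟨h1, ?_⟩
        have := hbound d h0
        rw [h1] at this
        omega
  have hfin : ((fun d => d + Finsupp.single 0 1) '' filtSet n k w ∪
      {d : Fin (n + 2) →₀ ℕ | d 0 = 0 ∧ Finsupp.weight (xWeight n) d = k}).Finite :=
    hun ▸ filtSet_finite n k (w + (n + 1))
  rw [hun, Set.ncard_union_eq _ (hfin.subset Set.subset_union_left)
    (hfin.subset Set.subset_union_right), ncard_monomials,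
    Set.ncard_image_of_injective _ (add_left_injective _)]
  rw [Set.disjoint_left]
  rintro d ⟨e, _, rfl⟩ ⟨h0, _⟩
  simp at h0

lemma ncard_pieceSet_add (n k w : ℕ) (hw : (n + 1) * k ≤ w + (n + 1)) :
    (pieceSet n k (w + 1 + (n + 1))).ncard = (pieceSet n k (w + 1)).ncard := by
  have h1 := ncard_filtSet_add n k w hw
  have h2 := ncard_filtSet_add n k (w + 1) (by omega)
  have h3 := ncard_filtSet_succ n k w
  have h4 := ncard_filtSet_succ n k (w + (n + 1))
  rw [show w + (n + 1) + 1 = w + 1 + (n + 1) by omega] at h4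
  omega

section Count

variable {n k : ℕ}

/-- `D` restricted to the elements of weight `w`. -/
noncomputable def pieceD (n k w : ℕ) : piece n k w →ₗ[ℂ] piece n k (w + 1) :=
  (kloostermanD n).toLinearMap.restrict fun _ hf => kloostermanD_mem_piece hf

lemma pieceD_injective
    (hD : ∀ w, ∀ f ∈ piece n k w, kloostermanD n f = 0 → f = 0) (w : ℕ) :
    Function.Injective (pieceD n k w) := by
  rw [← LinearMap.ker_eq_bot, LinearMap.ker_eq_bot']
  intro f hf
  exact Subtype.ext (hD w f f.2 (congrArg Subtype.val hf))

/-- The dimensions of the weight spaces are nondecreasing, as `D` is injective, and eventually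
periodic; hence they are eventually constant. -/
lemma ncard_pieceSet_eventually_const
    (hD : ∀ w, ∀ f ∈ piece n k w, kloostermanD n f = 0 → f = 0)
    (w i : ℕ) (hw : (n + 1) * k ≤ w) (hi : i ≤ n + 1) :
    (pieceSet n k (w + 1 + i)).ncard = (pieceSet n k (w + 1)).ncard := by
  have hmono : Monotone fun w => (pieceSet n k w).ncard := by
    refine monotone_nat_of_le_succ fun m => ?_
    rw [← finrank_piece, ← finrank_piece]
    exact LinearMap.finrank_le_finrank_of_injective (pieceD_injective hD m)
  refine le_antisymm ?_ (hmono (Nat.le_add_right _ _))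
  rw [← ncard_pieceSet_add n k w (by omega)]
  exact hmono (by omega)

lemma kloostermanD_surjective
    (hD : ∀ w, ∀ f ∈ piece n k w, kloostermanD n f = 0 → f = 0)
    (m : ℕ) (hm : (n + 1) * k + 1 ≤ m) (g : MvPolynomial (Fin (n + 2)) ℂ)
    (hg : g ∈ piece n k (m + 1)) : ∃ f ∈ piece n k m, kloostermanD n f = g := by
  have hr : Module.finrank ℂ (piece n k m) = Module.finrank ℂ (piece n k (m + 1)) := by
    rw [finrank_piece, finrank_piece]
    obtain ⟨w, rfl⟩ : ∃ w, m = w + 1 := ⟨m - 1, by omega⟩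
    exact (ncard_pieceSet_eventually_const hD w 1 (by omega) (by omega)).symm
  obtain ⟨f, hf⟩ := (LinearMap.injective_iff_surjective_of_finrank_eq_finrank hr).mp
    (pieceD_injective hD m) ⟨g, hg⟩
  exact ⟨f, f.2, congrArg Subtype.val hf⟩

lemma mul_ncard_pieceSet
    (hD : ∀ w, ∀ f ∈ piece n k w, kloostermanD n f = 0 → f = 0)
    (w : ℕ) (hw : (n + 1) * k ≤ w) :
    (n + 1) * (pieceSet n k (w + 1)).ncard = (n + k).choose n := by
  have h : ∀ i ≤ n + 1, (filtSet n k (w + i)).ncard =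
      (filtSet n k w).ncard + i * (pieceSet n k (w + 1)).ncard := by
    intro i
    induction i with
    | zero => simp
    | succ i ih =>
      intro hi
      have h1 := ncard_pieceSet_eventually_const hD w i hw (by omega)
      rw [← add_assoc, ncard_filtSet_succ, ih (by omega),
        show w + i + 1 = w + 1 + i by omega, h1]
      ring
  have h1 := h (n + 1) le_rfl
  rw [ncard_filtSet_add n k w (by omega)] at h1
  omega

end Count

/-! ### The cokernel -/

/-- The cokernel of `θ` is `F_{W+1} / θ F_W` as soon as `D` is onto in weights above `W`, where
`F_w` is the part of `P_k` of weight at most `w`; the count is `dim F_{W+1} - dim F_W`. -/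
lemma finrank_coker {n k W : ℕ}
    (hD : ∀ w, ∀ f ∈ piece n k w, kloostermanD n f = 0 → f = 0)
    (hsurj : ∀ m, W ≤ m → ∀ g ∈ piece n k (m + 1), ∃ f ∈ piece n k m, kloostermanD n f = g) :
    FiniteDimensional ℂ
      (↥(kloostermanPk n k) ⧸
        Submodule.comap (kloostermanPk n k).subtype
          (Submodule.map (kloostermanTheta n) (kloostermanPk n k))) ∧
    Module.finrank ℂ
      (↥(kloostermanPk n k) ⧸
        Submodule.comap (kloostermanPk n k).subtype
          (Submodule.map (kloostermanTheta n) (kloostermanPk n k))) =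
      (pieceSet n k (W + 1)).ncard := by
  set Q := Submodule.comap (kloostermanPk n k).subtype
          (Submodule.map (kloostermanTheta n) (kloostermanPk n k)) with hQ
  let π : filt n k (W + 1) →ₗ[ℂ] (↥(kloostermanPk n k) ⧸ Q) :=
    Q.mkQ ∘ₗ Submodule.inclusion (filt_le_Pk n k (W + 1))
  have hπ : Function.Surjective π := by
    intro q
    obtain ⟨f, rfl⟩ := Q.mkQ_surjective q
    obtain ⟨g, hg, hfg⟩ := exists_sub_theta_mem hsurj f.2
    refine ⟨⟨_, hfg⟩, ?_⟩
    refine (Submodule.Quotient.eq Q).mpr ?_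
    refine ⟨-g, neg_mem hg, ?_⟩
    simp
  let τ : filt n k W →ₗ[ℂ] filt n k (W + 1) :=
    (kloostermanTheta n).restrict fun _ hf => kloostermanTheta_mem_filt hf
  have hτ : Function.Injective τ := by
    rw [← LinearMap.ker_eq_bot, LinearMap.ker_eq_bot']
    intro f hf
    exact Subtype.ext (kloostermanTheta_eq_zero hD (filt_le_Pk _ _ _ f.2)
      (congrArg Subtype.val hf))
  have hker : LinearMap.ker π = LinearMap.range τ := by
    ext f
    rw [LinearMap.mem_ker, LinearMap.mem_range]
    change Q.mkQ (Submodule.inclusion (filt_le_Pk n k (W + 1)) f) = 0 ↔ _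
    rw [Submodule.mkQ_apply, Submodule.Quotient.mk_eq_zero]
    constructor
    · rintro ⟨g, hg, hgf⟩
      have hgf' : kloostermanTheta n g = f := hgf
      exact ⟨⟨g, mem_filt_of_theta_mem hD hg (by rw [hgf']; exact f.2)⟩, Subtype.ext hgf'⟩
    · rintro ⟨g, rfl⟩
      exact ⟨g, filt_le_Pk _ _ _ g.2, rfl⟩
  refine ⟨Module.Finite.of_surjective π hπ, ?_⟩
  have h1 := LinearMap.finrank_range_add_finrank_ker π
  rw [LinearMap.range_eq_top.mpr hπ, finrank_top, hker, LinearMap.finrank_range_of_inj hτ,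
    finrank_filt, finrank_filt, ncard_filtSet_succ] at h1
  omega

/-- Let `n ≥ 1`, `k ≥ 1`, `ζ` a primitive `(n+1)`-th root of unity, and
assume there is no `I ∈ ℕ^{n+1}` with `|I| = k` and `Σ_i I_i ζ^i = 0`.  Then
`θ = z∂_z + D` is injective on `P_k`, maps `P_k` into `P_k`, its cokernel on `P_k` is a
finite-dimensional `ℂ`-vector space, and `(n+1)·dim_ℂ coker(θ) = C(n+k, n)`. -/
theorem kloosterman_deRham_dimension (n k : ℕ) (hn : 1 ≤ n) (hk : 1 ≤ k) (ζ : ℂ)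
    (hζ : IsPrimitiveRoot ζ (n + 1))
    (hno : ¬∃ I : Fin (n + 1) → ℕ,
      (∑ i, I i) = k ∧ (∑ i : Fin (n + 1), (I i : ℂ) * ζ ^ (i : ℕ)) = 0) :
    Set.InjOn (kloostermanTheta n) (kloostermanPk n k) ∧
    Submodule.map (kloostermanTheta n) (kloostermanPk n k) ≤ kloostermanPk n k ∧
    FiniteDimensional ℂ
      (↥(kloostermanPk n k) ⧸
        Submodule.comap (kloostermanPk n k).subtype
          (Submodule.map (kloostermanTheta n) (kloostermanPk n k))) ∧
    (n + 1) * Module.finrank ℂ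
      (↥(kloostermanPk n k) ⧸
        Submodule.comap (kloostermanPk n k).subtype
          (Submodule.map (kloostermanTheta n) (kloostermanPk n k))) = (n + k).choose n := by
  have hD : ∀ w, ∀ f ∈ piece n k w, kloostermanD n f = 0 → f = 0 := fun w f hf h =>
    kloostermanD_eq_zero n k w ζ hζ hno (mem_piece.mp hf).1 (mem_piece.mp hf).2 h
  obtain ⟨hfin, hrank⟩ := finrank_coker (W := (n + 1) * k + 1) hD
    fun m hm g hg => kloostermanD_surjective hD m hm g hg
  refine ⟨fun f hf g hg h => ?_, ?_, hfin, ?_⟩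
  · refine sub_eq_zero.mp (kloostermanTheta_eq_zero hD (sub_mem hf hg) ?_)
    rw [map_sub, h, sub_self]
  · rintro _ ⟨f, hf, rfl⟩
    exact kloostermanTheta_mem_Pk hf
  · rw [hrank]
    exact mul_ncard_pieceSet hD _ (by omega)
end
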